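/- Let k ∈ ℕ, s > 0, and let g : [0,∞) → ℂ be a C^∞ function with compact support. Then lim_{ε→0⁺} ∫₀^∞ g(u)·( (u − s − iε)^{−(k+1)} − (u − s + iε)^{−(k+1)} ) du = (2πi/k!) · g^{(k)}(s). -/

import Mathlib

open MeasureTheory Real Complex Filter

open ProbabilityTheory
open scoped Topology Nat

/-!
Up to the factor `2πi`, the difference of the two Cauchy kernels `(u - s ∓ iε)⁻¹` is the density
of the Cauchy distribution centred at `s` with scale `ε`, which is an approximate identity: this
is the case `k = 0`. The kernels of order `k + 1` are the `k`-th derivatives of these, up to the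
factor `(-1) ^ k * k!`, so for a compactly supported `C^k` function `k` integrations by parts on
the whole line reduce to `k = 0`. Away from `s` the kernel difference tends to zero boundedly;
hence only the germ at `s` matters, and a bump function removes the boundary of the domain of
integration.
-/

section Localization

variable {V E : Type*} [NormedAddCommGroup V] [NormedSpace ℝ V] [NormedAddCommGroup E]
  [NormedSpace ℝ E]

lemma contDiff_contDiffBump_smul [HasContDiffBump V] {n : ℕ∞} {f : V → E} {x₀ : V}
    (χ : ContDiffBump x₀) (hf : ∀ x ∈ Metric.closedBall x₀ χ.rOut, ContDiffAt ℝ n f x) :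
    ContDiff ℝ n fun x ↦ χ x • f x := by
  refine contDiff_iff_contDiffAt.2 fun x ↦ ?_
  by_cases hx : x ∈ Metric.closedBall x₀ χ.rOut
  · exact χ.contDiff.contDiffAt.smul (hf x hx)
  · rw [← χ.tsupport_eq, notMem_tsupport_iff_eventuallyEq] at hx
    exact (contDiffAt_const (c := 0)).congr_of_eventuallyEq (hx.mono fun y hy ↦ by simp [hy])

lemma exists_contDiff_hasCompactSupport_eventuallyEq [FiniteDimensional ℝ V] {k : ℕ} {S : Set V}
    {f : V → E} {x₀ : V} (hS : S ∈ 𝓝 x₀) (hf : ContDiffAt ℝ k f x₀) :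
    ∃ F : V → E, ContDiff ℝ k F ∧ HasCompactSupport F ∧ Function.support F ⊆ S ∧
      F =ᶠ[𝓝 x₀] f := by
  obtain ⟨r, hr, hball⟩ := Metric.nhds_basis_closedBall.mem_iff.1
    (inter_mem hS (hf.eventually (by simp)))
  let χ : ContDiffBump x₀ := ⟨r / 2, r, half_pos hr, half_lt_self hr⟩
  refine ⟨fun x ↦ χ x • f x, contDiff_contDiffBump_smul χ fun x hx ↦ (hball hx).2,
    χ.hasCompactSupport.smul_right, fun x hx ↦ (hball ?_).1, ?_⟩
  · rw [← χ.tsupport_eq]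
    exact subset_tsupport χ fun h ↦ hx (by simp [h])
  · filter_upwards [χ.eventuallyEq_one] with x hx
    simp [hx]

end Localization

lemma integral_bilinear_iteratedDeriv_left_eq {E₁ E₂ E₃ : Type*}
    [NormedAddCommGroup E₁] [NormedSpace ℝ E₁] [NormedAddCommGroup E₂] [NormedSpace ℝ E₂]
    [NormedAddCommGroup E₃] [NormedSpace ℝ E₃] (L : E₁ →L[ℝ] E₂ →L[ℝ] E₃) {k : ℕ}
    {u : ℝ → E₁} {v : ℝ → E₂} (hu : ContDiff ℝ k u) (hv : ContDiff ℝ k v)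
    (hvc : HasCompactSupport v) :
    ∫ x, L (iteratedDeriv k u x) (v x) = (-1 : ℝ) ^ k • ∫ x, L (u x) (iteratedDeriv k v x) := by
  induction k generalizing v with
  | zero => simp
  | succ k ih =>
    have integrable_bilin {w₁ : ℝ → E₁} {w₂ : ℝ → E₂} (h₁ : Continuous w₁) (h₂ : Continuous w₂)
        (h₂c : HasCompactSupport w₂) : Integrable fun x ↦ L (w₁ x) (w₂ x) :=
      ((L.continuous.comp h₁).clm_apply h₂).integrable_of_hasCompactSupport
        (h₂c.mono fun x hx h ↦ hx (by simp [h]))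
    have hv1 : ContDiff ℝ 1 v := hv.of_le (by simp)
    have hv' : ContDiff ℝ k (deriv v) := (contDiff_succ_iff_deriv.1 hv).2.2
    have huk : Continuous (iteratedDeriv k u) := hu.continuous_iteratedDeriv k (by simp)
    have huk' (x : ℝ) : HasDerivAt (iteratedDeriv k u) (iteratedDeriv (k + 1) u x) x := by
      rw [iteratedDeriv_succ]
      exact (hu.differentiable_iteratedDeriv' k x).hasDerivAt
    have parts := integral_bilinear_hasDerivAt_right_eq_neg_left_of_integrable (L := L)
      (fun x _ ↦ huk' x) (fun x _ ↦ (hv1.differentiable one_ne_zero x).hasDerivAt)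
      (integrable_bilin huk hv'.continuous hvc.deriv)
      (integrable_bilin (hu.continuous_iteratedDeriv' (k + 1)) hv.continuous hvc)
      (integrable_bilin huk hv.continuous hvc)
    rw [← neg_eq_iff_eq_neg.2 parts, ih (hu.of_le (by simp)) hv' hvc.deriv, iteratedDeriv_succ',
      pow_succ, mul_neg_one, neg_smul]

lemma tendsto_norm_mul_cauchyPDFReal_cobounded (γ : NNReal) :
    Tendsto (fun x ↦ ‖x‖ * cauchyPDFReal 0 γ x) (Bornology.cobounded ℝ) (𝓝 0) := by
  have inv_norm : Tendsto (fun x : ℝ ↦ π⁻¹ * γ * ‖x‖⁻¹) (Bornology.cobounded ℝ) (𝓝 0) := by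
    simpa using (tendsto_norm_cobounded_atTop (E := ℝ)).inv_tendsto_atTop.const_mul (π⁻¹ * γ)
  refine squeeze_zero' (.of_forall fun x ↦ ?_) ?_ inv_norm
  · rw [cauchyPDFReal_def]
    positivity
  filter_upwards [eventually_cobounded_le_norm 1] with x hx
  have : 0 < ‖x‖ := one_pos.trans_le hx
  calc ‖x‖ * cauchyPDFReal 0 γ x
      = π⁻¹ * γ * (‖x‖ * (‖x‖ ^ 2 + γ ^ 2)⁻¹) := by
        rw [cauchyPDFReal_def, sub_zero, norm_eq_abs, sq_abs]
        ring
    _ ≤ π⁻¹ * γ * (‖x‖ * (‖x‖ ^ 2)⁻¹) := by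
        gcongr
        exact le_add_of_nonneg_right (sq_nonneg _)
    _ = π⁻¹ * γ * ‖x‖⁻¹ := by field_simp

lemma tendsto_integral_cauchyPDFReal_smul {E : Type*} [NormedAddCommGroup E] [NormedSpace ℝ E]
    [CompleteSpace E] {f : ℝ → E} {x₀ : ℝ} (hf : Integrable f) (hfc : ContinuousAt f x₀) :
    Tendsto (fun γ : ℝ ↦ ∫ x, cauchyPDFReal x₀ γ.toNNReal x • f x) (𝓝[>] 0) (𝓝 (f x₀)) := by
  have approx := (tendsto_integral_comp_smul_smul_of_integrable'
    (fun x ↦ (cauchyPDF_pos 0 one_ne_zero x).le) (integral_cauchyPDFReal_eq_one 0 one_ne_zero)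
    (by simpa using tendsto_norm_mul_cauchyPDFReal_cobounded 1) hf hfc).comp tendsto_inv_nhdsGT_zero
  refine approx.congr' ?_
  filter_upwards [self_mem_nhdsWithin] with γ (hγ : 0 < γ)
  refine integral_congr_ae (.of_forall fun x ↦ ?_)
  simp only [Module.finrank_self, pow_one, cauchyPDFReal_def, Real.coe_toNNReal γ hγ.le,
    smul_eq_mul, sub_zero, NNReal.coe_one, one_pow, mul_one]
  congr 1
  field_simp
  ring

/-- The jump of the Cauchy kernel of order `k + 1`,
`z ↦ ((u - z) ^ (k + 1))⁻¹`, between `z = s + iε` and `z = s - iε`. -/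
noncomputable def cauchyJumpKernel (k : ℕ) (s ε u : ℝ) : ℂ :=
  ((u : ℂ) - s - ε * I) ^ (-(k + 1 : ℤ)) - ((u : ℂ) - s + ε * I) ^ (-(k + 1 : ℤ))

section Kernel

variable {k : ℕ} {s ε u : ℝ}

lemma ofReal_sub_ofReal_sub_mul_I_ne_zero (h : u ≠ s ∨ ε ≠ 0) : (u : ℂ) - s - ε * I ≠ 0 := by
  simpa [Complex.ext_iff, sub_eq_zero, imp_iff_not_or, eq_comm] using h

lemma ofReal_sub_ofReal_add_mul_I_ne_zero (h : u ≠ s ∨ ε ≠ 0) : (u : ℂ) - s + ε * I ≠ 0 := by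
  simpa [Complex.ext_iff, sub_eq_zero, imp_iff_not_or, eq_comm] using h

lemma hasDerivAt_cauchyJumpKernel (hε : ε ≠ 0) :
    HasDerivAt (cauchyJumpKernel k s ε) (-(k + 1) * cauchyJumpKernel (k + 1) s ε u) u := by
  have hsub : HasDerivAt (fun u : ℝ ↦ (u : ℂ) - s - ε * I) 1 u :=
    (((hasDerivAt_id u).ofReal_comp).sub_const _).sub_const _
  have hadd : HasDerivAt (fun u : ℝ ↦ (u : ℂ) - s + ε * I) 1 u :=
    (((hasDerivAt_id u).ofReal_comp).sub_const _).add_const _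
  have hpow {z : ℂ} (hz : z ≠ 0) := hasDerivAt_zpow (-(k + 1 : ℤ)) z (.inl hz)
  have hjump := ((hpow (ofReal_sub_ofReal_sub_mul_I_ne_zero (.inr hε))).comp u hsub).sub
    ((hpow (ofReal_sub_ofReal_add_mul_I_ne_zero (.inr hε))).comp u hadd)
  refine hjump.congr_deriv ?_
  have hexp : (-(k + 1 : ℤ) - 1) = -((k + 1 : ℕ) + 1 : ℤ) := by push_cast; ring
  simp only [cauchyJumpKernel, hexp]
  push_cast
  ring

lemma contDiff_cauchyJumpKernel {n : WithTop ℕ∞} (hε : ε ≠ 0) :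
    ContDiff ℝ n (cauchyJumpKernel k s ε) := by
  have hofReal : ContDiff ℝ n ((↑) : ℝ → ℂ) := ofRealCLM.contDiff
  have hexp : (k + 1 : ℤ) = ((k + 1 : ℕ) : ℤ) := by push_cast; rfl
  unfold cauchyJumpKernel
  simp only [zpow_neg, hexp, zpow_natCast]
  exact ((((hofReal.sub contDiff_const).sub contDiff_const).pow _).inv fun u ↦
      pow_ne_zero _ (ofReal_sub_ofReal_sub_mul_I_ne_zero (.inr hε))).sub
    ((((hofReal.sub contDiff_const).add contDiff_const).pow _).inv fun u ↦
      pow_ne_zero _ (ofReal_sub_ofReal_add_mul_I_ne_zero (.inr hε)))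

lemma iteratedDeriv_cauchyJumpKernel_zero (hε : ε ≠ 0) :
    iteratedDeriv k (cauchyJumpKernel 0 s ε) =
      fun u ↦ (-1) ^ k * k ! * cauchyJumpKernel k s ε u := by
  induction k with
  | zero => simp
  | succ k ih =>
    ext u
    rw [iteratedDeriv_succ, ih, ((hasDerivAt_cauchyJumpKernel hε).const_mul _).deriv,
      Nat.factorial_succ]
    push_cast
    ring

lemma cauchyJumpKernel_zero_eq_cauchyPDFReal (hε : 0 < ε) :
    cauchyJumpKernel 0 s ε u = 2 * π * I * cauchyPDFReal s ε.toNNReal u := by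
  have hsub : (u : ℂ) - s - ε * I ≠ 0 := ofReal_sub_ofReal_sub_mul_I_ne_zero (.inr hε.ne')
  have hadd : (u : ℂ) - s + ε * I ≠ 0 := ofReal_sub_ofReal_add_mul_I_ne_zero (.inr hε.ne')
  have hfactor : ((u : ℂ) - s) ^ 2 + ε ^ 2 = (u - s - ε * I) * (u - s + ε * I) := by
    linear_combination (ε : ℂ) ^ 2 * I_sq
  have hpi : (π : ℂ) ≠ 0 := ofReal_ne_zero.2 pi_ne_zero
  simp only [cauchyJumpKernel, cauchyPDFReal_def, Real.coe_toNNReal ε hε.le]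
  push_cast
  simp only [hfactor, zpow_neg_one]
  field_simp
  ring

lemma norm_cauchyJumpKernel_le {δ : ℝ} (hδ : 0 < δ) (h : δ ≤ max |u - s| |ε|) :
    ‖cauchyJumpKernel k s ε u‖ ≤ 2 * (δ ^ (k + 1))⁻¹ := by
  have norm_pow_le {z : ℂ} (hre : |z.re| = |u - s|) (him : |z.im| = |ε|) :
      ‖z ^ (-(k + 1 : ℤ))‖ ≤ (δ ^ (k + 1))⁻¹ := by
    have hz : δ ≤ ‖z‖ :=
      h.trans (max_le (hre ▸ abs_re_le_norm z) (him ▸ abs_im_le_norm z))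
    rw [norm_zpow, zpow_neg]
    exact_mod_cast inv_anti₀ (by positivity) (pow_le_pow_left₀ hδ.le hz _)
  rw [two_mul]
  exact (norm_sub_le _ _).trans
    (add_le_add (norm_pow_le (by simp) (by simp)) (norm_pow_le (by simp) (by simp)))

lemma tendsto_cauchyJumpKernel_nhds_zero (hu : u ≠ s) :
    Tendsto (fun ε ↦ cauchyJumpKernel k s ε u) (𝓝 0) (𝓝 0) := by
  have hcont : ContinuousAt (fun ε : ℝ ↦ cauchyJumpKernel k s ε u) 0 := by
    refine ContinuousAt.sub (.zpow₀ (by fun_prop) _ (.inl ?_)) (.zpow₀ (by fun_prop) _ (.inl ?_))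
    · exact ofReal_sub_ofReal_sub_mul_I_ne_zero (.inl hu)
    · exact ofReal_sub_ofReal_add_mul_I_ne_zero (.inl hu)
  simpa [cauchyJumpKernel] using hcont.tendsto

end Kernel

section Jump

variable {E : Type*} [NormedAddCommGroup E] [NormedSpace ℂ E] {k : ℕ} {s ε : ℝ} {f F : ℝ → E}

lemma integrable_cauchyJumpKernel_smul {μ : Measure ℝ} (hf : Integrable f μ) (hε : ε ≠ 0) :
    Integrable (fun u ↦ cauchyJumpKernel k s ε u • f u) μ :=
  hf.bdd_smul _ (contDiff_cauchyJumpKernel (n := 0) hε).continuous.aestronglyMeasurable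
    (.of_forall fun _ ↦ norm_cauchyJumpKernel_le (abs_pos.2 hε) (le_max_right _ _))

lemma integral_cauchyJumpKernel_smul (hε : ε ≠ 0) (hF : ContDiff ℝ k F)
    (hFc : HasCompactSupport F) :
    ∫ u, cauchyJumpKernel k s ε u • F u =
      (k ! : ℂ)⁻¹ • ∫ u, cauchyJumpKernel 0 s ε u • iteratedDeriv k F u := by
  have hk : (k ! : ℂ) ≠ 0 := Nat.cast_ne_zero.2 k.factorial_ne_zero
  have parts : (-1 : ℂ) ^ k • (k ! : ℂ) • ∫ u, cauchyJumpKernel k s ε u • F u =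
      (-1 : ℂ) ^ k • ∫ u, cauchyJumpKernel 0 s ε u • iteratedDeriv k F u := by
    have := integral_bilinear_iteratedDeriv_left_eq (.lsmul ℝ ℂ)
      (contDiff_cauchyJumpKernel (k := 0) (s := s) hε) hF hFc
    simpa only [iteratedDeriv_cauchyJumpKernel_zero hε, ContinuousLinearMap.lsmul_apply, mul_smul,
      integral_smul, ← Complex.coe_smul, ofReal_pow, ofReal_neg, ofReal_one] using this
  rw [eq_inv_smul_iff₀ hk]
  exact smul_right_injective E (pow_ne_zero k (neg_ne_zero.2 one_ne_zero)) parts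

lemma tendsto_integral_cauchyJumpKernel_zero_smul [CompleteSpace E] (hf : Integrable f)
    (hfc : ContinuousAt f s) :
    Tendsto (fun ε ↦ ∫ u, cauchyJumpKernel 0 s ε u • f u) (𝓝[>] 0)
      (𝓝 ((2 * π * I) • f s)) := by
  refine ((tendsto_integral_cauchyPDFReal_smul hf hfc).const_smul (2 * π * I)).congr' ?_
  filter_upwards [self_mem_nhdsWithin] with ε hε
  rw [← integral_smul]
  simp only [cauchyJumpKernel_zero_eq_cauchyPDFReal hε, mul_smul, Complex.coe_smul]

lemma tendsto_integral_cauchyJumpKernel_smul_of_hasCompactSupport [CompleteSpace E]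
    (hF : ContDiff ℝ k F) (hFc : HasCompactSupport F) :
    Tendsto (fun ε ↦ ∫ u, cauchyJumpKernel k s ε u • F u) (𝓝[>] 0)
      (𝓝 ((2 * π * I / k !) • iteratedDeriv k F s)) := by
  have hFk : Continuous (iteratedDeriv k F) := hF.continuous_iteratedDeriv' k
  have hFkc : HasCompactSupport (iteratedDeriv k F) :=
    (hFc.iteratedFDeriv (𝕜 := ℝ) k).mono fun x hx h ↦ hx (by simp [iteratedDeriv, h])
  have base := (tendsto_integral_cauchyJumpKernel_zero_smul (s := s)
    (hFk.integrable_of_hasCompactSupport hFkc) hFk.continuousAt).const_smul (k ! : ℂ)⁻¹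
  rw [smul_smul, inv_mul_eq_div] at base
  refine base.congr' ?_
  filter_upwards [self_mem_nhdsWithin] with ε (hε : 0 < ε)
  exact (integral_cauchyJumpKernel_smul hε.ne' hF hFc).symm

lemma tendsto_integral_cauchyJumpKernel_smul_of_eventuallyEq_zero {μ : Measure ℝ}
    (hf : Integrable f μ) (hfs : f =ᶠ[𝓝 s] 0) :
    Tendsto (fun ε ↦ ∫ u, cauchyJumpKernel k s ε u • f u ∂μ) (𝓝[≠] 0) (𝓝 0) := by
  obtain ⟨δ, hδ, hball⟩ := Metric.eventually_nhds_iff.1 hfs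
  rw [← integral_zero ℝ E (μ := μ)]
  refine tendsto_integral_filter_of_dominated_convergence
    (fun u ↦ 2 * (δ ^ (k + 1))⁻¹ * ‖f u‖) ?_ (.of_forall fun ε ↦ .of_forall fun u ↦ ?_)
    (hf.norm.const_mul _) (.of_forall fun u ↦ ?_)
  · filter_upwards [self_mem_nhdsWithin] with ε hε
    exact (integrable_cauchyJumpKernel_smul hf hε).aestronglyMeasurable
  · rw [norm_smul]
    rcases lt_or_ge (dist u s) δ with hu | hu
    · simp [hball hu]
    · gcongr
      exact norm_cauchyJumpKernel_le hδ (le_max_of_le_left hu)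
  · rcases eq_or_ne u s with rfl | hu
    · simp [hfs.eq_of_nhds]
    · simpa using ((tendsto_cauchyJumpKernel_nhds_zero hu).mono_left nhdsWithin_le_nhds).smul_const
        (f u)

end Jump

theorem higher_order_jump_general {E : Type*} [NormedAddCommGroup E] [NormedSpace ℂ E]
    [CompleteSpace E] {k : ℕ} {s : ℝ} {S : Set ℝ} (hS : S ∈ 𝓝 s) {f : ℝ → E}
    (hfS : IntegrableOn f S) (hfs : ContDiffAt ℝ k f s) :
    Tendsto (fun ε : ℝ ↦ ∫ u in S,
        (((u : ℂ) - s - ε * I) ^ (-(k + 1 : ℤ)) - ((u : ℂ) - s + ε * I) ^ (-(k + 1 : ℤ))) • f u)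
      (𝓝[>] 0) (𝓝 ((2 * π * I / k !) • iteratedDeriv k f s)) := by
  obtain ⟨F, hF, hFc, hFS, hFf⟩ := exists_contDiff_hasCompactSupport_eventuallyEq hS hfs
  have hFi : IntegrableOn F S :=
    (hF.continuous.integrable_of_hasCompactSupport hFc).integrableOn
  have near := tendsto_integral_cauchyJumpKernel_smul_of_hasCompactSupport (s := s) hF hFc
  have far := tendsto_integral_cauchyJumpKernel_smul_of_eventuallyEq_zero (k := k)
    (hfS.sub hFi) (hFf.mono fun u hu ↦ by simp [hu])
  rw [hFf.iteratedDeriv_eq] at near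
  rw [← add_zero ((2 * π * I / k !) • iteratedDeriv k f s)]
  refine (near.add (far.mono_left (nhdsGT_le_nhdsNE 0))).congr' ?_
  filter_upwards [self_mem_nhdsWithin] with ε (hε : 0 < ε)
  rw [← setIntegral_eq_integral_of_forall_compl_eq_zero (s := S) fun u hu ↦ by
      rw [Function.notMem_support.1 fun h ↦ hu (hFS h), smul_zero],
    ← integral_add (integrable_cauchyJumpKernel_smul hFi hε.ne')
      (integrable_cauchyJumpKernel_smul (hfS.sub hFi) hε.ne')]
  simp only [← smul_add, Pi.sub_apply, add_sub_cancel, cauchyJumpKernel]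

theorem higher_order_jump (k : ℕ) (s : ℝ) (hs : 0 < s) (g : ℝ → ℂ)
    (hg : ContDiff ℝ (⊤ : ℕ∞) g) (hgs : HasCompactSupport g) :
    Tendsto (fun ε : ℝ =>
        ∫ u in Set.Ioi (0 : ℝ),
          g u * (((u : ℂ) - s - ε * Complex.I) ^ (-(k + 1 : ℤ)) -
            ((u : ℂ) - s + ε * Complex.I) ^ (-(k + 1 : ℤ))))
      (nhdsWithin 0 (Set.Ioi 0))
      (nhds (2 * Real.pi * Complex.I / (Nat.factorial k) * iteratedDeriv k g s)) := by
  simpa only [smul_eq_mul, mul_comm (g _)] using higher_order_jump_general (Ioi_mem_nhds hs)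
    (hg.continuous.integrable_of_hasCompactSupport hgs).integrableOn
    (hg.contDiffAt.of_le (mod_cast le_top))
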